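/- arXiv:1608.08184 — 2 statements merged into one kernel-verified Lean document; each statement's English description precedes it below -/
import Mathlib

section
/- There exists a constant C > 0, independent of p and q, such that for every integer p ≥ 2, every integer q with 0 ≤ q ≤ p−1, and every polynomial u ∈ P_p, the projector π_q satisfies ‖u − π_q u‖_{L²(−1,1)} ≤ C (q+1)^{−1} ‖(I u)'‖_{L²(−1,1)}. -/
open Polynomial

/-- The `k`-th Legendre polynomial (Rodrigues' formula), normalized so that `L_k(1) = 1`
and `∫_{−1}^{1} L_k L_j ds = 2δ_{kj}/(2k+1)`. -/
noncomputable def legendre (k : ℕ) : Polynomial ℝ :=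
  ((2 ^ k * (Nat.factorial k) : ℝ))⁻¹ •
    ((fun q => Polynomial.derivative q)^[k] ((Polynomial.X ^ 2 - 1) ^ k))

/-- The reconstruction operator `I : P_p → P_{p+1}`,
`I v := v − v(−1)·(−1)^p (L_p − L_{p+1})/2`. -/
noncomputable def recon (p : ℕ) (v : Polynomial ℝ) : Polynomial ℝ :=
  v - (v.eval (-1) * (-1 : ℝ) ^ p / 2) • (legendre p - legendre (p + 1))

/-- The basis polynomials `ψ_0 := (L_1 + L_0)/√2`,
`ψ_k := (L_{k+1} − L_{k−1})/√(4k+2)` for `1 ≤ k ≤ p−1`, and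
`ψ_p := (L_p − L_{p−1})/√(4p+2)`. -/
noncomputable def psi (p k : ℕ) : Polynomial ℝ :=
  if k = 0 then (Real.sqrt 2)⁻¹ • (legendre 1 + legendre 0)
  else if k = p then (Real.sqrt (4 * (p : ℝ) + 2))⁻¹ • (legendre p - legendre (p - 1))
  else (Real.sqrt (4 * (k : ℝ) + 2))⁻¹ • (legendre (k + 1) - legendre (k - 1))

open intervalIntegral

lemma psi_int (f : ℝ[X]) (a b : ℝ) : IntervalIntegrable (fun s => f.eval s) MeasureTheory.volume a b :=
  (Polynomial.continuous f).intervalIntegrable a b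

lemma poly_parts {b : ℝ} (f g : ℝ[X]) (h : f.eval 1 * g.eval 1 - f.eval (-1) * g.eval (-1) = b) :
    ∫ s in (-1:ℝ)..1, (derivative f * g).eval s = b - ∫ s in (-1:ℝ)..1, (f * derivative g).eval s := by
  have := integral_eq_sub_of_hasDerivAt (a := -1) (b := 1) (f := fun s => (f * g).eval s)
    (fun x _ => (f * g).hasDerivAt x) (psi_int _ _ _)
  rw [derivative_mul] at this
  simp only [eval_add] at this
  rw [integral_add (psi_int _ _ _) (psi_int _ _ _)] at this
  simp only [eval_mul] at this ⊢
  linarith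

lemma w_eval (i k : ℕ) (h : i < k) (x : ℝ) (hx : x ^ 2 = 1) :
    (derivative^[i] ((X ^ 2 - 1 : ℝ[X]) ^ k)).eval x = 0 := by
  obtain ⟨r, hr⟩ : (X ^ 2 - 1 : ℝ[X]) ∣ derivative^[i] ((X ^ 2 - 1 : ℝ[X]) ^ k) :=
    (dvd_pow_self _ (by omega)).trans (Polynomial.pow_sub_dvd_iterate_derivative_pow _ _ _)
  rw [hr]; simp [hx]

lemma leg_eq (k : ℕ) : legendre k = ((2 ^ k * (Nat.factorial k) : ℝ))⁻¹ •
    (derivative^[k] ((X ^ 2 - 1 : ℝ[X]) ^ k)) := rfl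

lemma leg_endpoint (k : ℕ) (x : ℝ) (hx : x ^ 2 = 1) : (legendre k).eval x = x ^ k := by
  induction k with
  | zero => simp [leg_eq]
  | succ k ih =>
    have h1 : derivative ((X ^ 2 - 1 : ℝ[X]) ^ (k+1)) = (2 * (k + 1) : ℝ) • ((X ^ 2 - 1) ^ k * X) := by
      rw [derivative_pow]
      simp [smul_eq_C_mul, map_ofNat]
      ring
    rw [leg_eq] at ih ⊢
    rw [Function.iterate_succ_apply, h1, iterate_derivative_smul, iterate_derivative_mul_X]
    simp only [eval_smul, eval_add, eval_mul, eval_X, smul_eq_mul, nsmul_eq_mul, eval_natCast] at ih ⊢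
    have h2 : (k:ℝ) * (derivative^[k-1] ((X ^ 2 - 1 : ℝ[X]) ^ k)).eval x = 0 := by
      rcases Nat.eq_zero_or_pos k with h | h
      · simp [h]
      · rw [w_eval _ _ (by omega) x hx, mul_zero]
    rw [h2, pow_succ x, ← ih, Nat.factorial_succ]
    have := Nat.factorial_ne_zero k
    push_cast
    field_simp
    ring

lemma leg_deriv (k : ℕ) : derivative (legendre (k+2)) - derivative (legendre k)
    = (2 * (k:ℝ) + 3) • legendre (k+1) := by
  have h1 : derivative (derivative ((X ^ 2 - 1 : ℝ[X]) ^ (k+2))) =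
      (2 * ((k:ℝ) + 2) * (2 * k + 3)) • ((X ^ 2 - 1) ^ (k+1)) +
      (4 * ((k:ℝ) + 1) * (k + 2)) • (X ^ 2 - 1) ^ k := by
    rw [derivative_pow]
    simp [smul_eq_C_mul, derivative_pow, map_ofNat]
    ring
  simp only [leg_eq, derivative_smul]
  rw [← Function.iterate_succ_apply' derivative, ← Function.iterate_succ_apply' derivative]
  rw [Function.iterate_succ_apply, Function.iterate_succ_apply (n := k+1), h1, iterate_map_add,
    iterate_derivative_smul, iterate_derivative_smul]
  have := Nat.factorial_ne_zero k
  simp only [smul_add, smul_smul, Nat.factorial_succ]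
  rw [add_sub_assoc, ← sub_smul]
  have e1 : (2 ^ (k + 2) * (((k + 1 + 1) * ((k + 1) * k.factorial) : ℕ) : ℝ))⁻¹ * (4 * ((k:ℝ) + 1) * (k + 2)) -
      (2 ^ k * (k.factorial : ℝ))⁻¹ = 0 := by
    push_cast; field_simp; ring
  rw [e1, zero_smul, add_zero]
  congr 1
  push_cast; field_simp; ring

lemma leg_natDegree (k : ℕ) : (legendre k).natDegree ≤ k := by
  rw [leg_eq]
  refine (natDegree_smul_le _ _).trans ((natDegree_iterate_derivative _ _).trans ?_)
  have : ((X ^ 2 - 1 : ℝ[X]) ^ k).natDegree ≤ k * 2 :=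
    natDegree_pow_le_of_le k (by compute_degree)
  omega

lemma leg_parts (k n i : ℕ) (h : i + n = k) (f : ℝ[X]) (hf : f.natDegree < i) :
    ∫ s in (-1:ℝ)..1, (derivative^[i] ((X ^ 2 - 1 : ℝ[X]) ^ k) * f).eval s = 0 := by
  induction i generalizing n f with
  | zero => omega
  | succ i ih =>
    rw [Function.iterate_succ_apply', poly_parts (b := 0)]
    · rcases Nat.eq_zero_or_pos f.natDegree with h0 | h0
      · rw [natDegree_eq_zero] at h0
        obtain ⟨a, rfl⟩ := h0
        simp
      · rw [ih (n+1) (by omega) _ (by have := natDegree_derivative_lt h0.ne'; omega)]; simp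
    · rw [w_eval _ _ (by omega) _ (by norm_num), w_eval _ _ (by omega) _ (by norm_num)]; simp

lemma leg_orth_deg (k : ℕ) (f : ℝ[X]) (hf : f.natDegree < k) :
    ∫ s in (-1:ℝ)..1, (legendre k * f).eval s = 0 := by
  rw [leg_eq]
  simp only [smul_mul_assoc, eval_smul, smul_eq_mul]
  rw [integral_const_mul, leg_parts k 0 k (by omega) f hf, mul_zero]

lemma leg_orth (j k : ℕ) (h : j ≠ k) : ∫ s in (-1:ℝ)..1, (legendre j * legendre k).eval s = 0 := by
  rcases lt_or_gt_of_ne h with h | h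
  · rw [mul_comm]; exact leg_orth_deg _ _ ((leg_natDegree _).trans_lt h)
  · exact leg_orth_deg _ _ ((leg_natDegree _).trans_lt h)

lemma leg_zero : legendre 0 = 1 := by simp [leg_eq]

lemma leg_one : legendre 1 = X := by
  rw [leg_eq]
  have h : derivative^[1] ((X ^ 2 - 1 : ℝ[X]) ^ 1) = (2:ℝ) • X := by
    simp [smul_eq_C_mul, map_ofNat]; try norm_num
  rw [h, smul_smul]; norm_num

lemma leg_norm (k : ℕ) : ∫ s in (-1:ℝ)..1, (legendre k * legendre k).eval s = 2 / (2 * k + 1) := by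
  rcases k with _ | k
  · simp [leg_zero]; norm_num
  · have h1 := poly_parts (b := 2) (legendre (k+2)) (legendre (k+1)) (by
      simp only [leg_endpoint _ 1 (by norm_num), leg_endpoint _ (-1) (by norm_num)]
      rw [one_pow, one_pow, ← pow_add, show k + 2 + (k + 1) = 2 * (k + 1) + 1 by ring, pow_succ, pow_mul]
      norm_num)
    have hd (m : ℕ) : (derivative (legendre m)).natDegree ≤ m := 
      (natDegree_derivative_le _).trans ((Nat.sub_le _ _).trans (leg_natDegree _))
    rw [leg_orth_deg _ _ ((hd _).trans_lt (by omega))] at h1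
    have h2 := leg_orth_deg (k+1) (derivative (legendre k)) ((hd _).trans_lt (by omega))
    have h3 : derivative (legendre (k+2)) * legendre (k+1) =
      (2 * (k:ℝ) + 3) • (legendre (k+1) * legendre (k+1)) + legendre (k+1) * derivative (legendre k) := by
      rw [← smul_mul_assoc, ← leg_deriv]; ring
    rw [h3] at h1
    simp only [eval_add] at h1
    rw [integral_add (psi_int _ _ _) (psi_int _ _ _), h2] at h1
    simp only [eval_smul, smul_eq_mul] at h1
    rw [integral_const_mul] at h1
    push_cast
    rw [eq_div_iff (by positivity)]
    linarith

lemma leg_sum {ι : Type*} (s : Finset ι) (m : ι → ℕ) (hm : Set.InjOn m s) (a : ι → ℝ) :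
    ∫ x in (-1:ℝ)..1, ((∑ i ∈ s, a i • legendre (m i)).eval x) ^ 2 =
      ∑ i ∈ s, a i ^ 2 * (2 / (2 * (m i : ℝ) + 1)) := by
  have h : ∀ x : ℝ, ((∑ i ∈ s, a i • legendre (m i)).eval x) ^ 2 =
      ∑ i ∈ s, ∑ j ∈ s, a i * a j * (legendre (m i) * legendre (m j)).eval x := by
    intro x
    rw [eval_finsetSum, sq, Finset.sum_mul_sum]
    refine Finset.sum_congr rfl fun i _ => Finset.sum_congr rfl fun j _ => ?_
    simp only [eval_smul, eval_mul, smul_eq_mul]; ring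
  simp only [h]
  rw [integral_finsetSum]
  · refine Finset.sum_congr rfl fun i hi => ?_
    rw [integral_finsetSum]
    · rw [Finset.sum_eq_single i]
      · rw [integral_const_mul, leg_norm]; ring
      · intro j hj hji
        rw [integral_const_mul, leg_orth _ _ (fun e => hji (hm hi hj e).symm), mul_zero]
      · exact fun h => absurd hi h
    · exact fun j _ => (psi_int _ _ _).const_mul _
  · intro i _
    refine Continuous.intervalIntegrable ?_ _ _
    exact continuous_finsetSum _ fun j _ => continuous_const.mul (Polynomial.continuous _)

lemma psi_pos (p j : ℕ) (h0 : 0 < j) : psi p j = (Real.sqrt (4 * (j : ℝ) + 2))⁻¹ •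
    (legendre (if j = p then p else j + 1) - legendre (j - 1)) := by
  unfold psi
  rw [if_neg h0.ne']
  split_ifs with h
  · subst h; rfl
  · rfl

lemma sqrt_aux (j : ℕ) : (Real.sqrt (4 * (j : ℝ) + 2))⁻¹ * (2 * j + 1) = Real.sqrt (4 * (j : ℝ) + 2) / 2 := by
  have h : 0 < Real.sqrt (4 * (j : ℝ) + 2) := Real.sqrt_pos.2 (by positivity)
  have h2 := Real.sq_sqrt (show (0:ℝ) ≤ 4 * (j : ℝ) + 2 by positivity)
  field_simp
  linarith

lemma recon_deriv (p j : ℕ) (hp : 2 ≤ p) : derivative (recon p (psi p j)) =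
    (Real.sqrt (4 * (j : ℝ) + 2) / 2) • legendre j := by
  rcases Nat.eq_zero_or_pos j with rfl | h0
  · have h1 : (psi p 0).eval (-1) = 0 := by
      simp [psi, leg_one, leg_zero]
    rw [recon, h1]
    have h2 := sqrt_aux 0
    simp at h2
    simp [psi, leg_one, leg_zero, h2]
  · obtain ⟨i, rfl⟩ : ∃ i, j = i + 1 := ⟨j - 1, by omega⟩
    have key : recon p (psi p (i+1)) = (Real.sqrt (4 * ((i+1 : ℕ) : ℝ) + 2))⁻¹ •
        (legendre (i + 2) - legendre i) := by
      have hm : ((-1:ℝ)) ^ 2 = 1 := by norm_num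
      rw [psi_pos _ _ h0, recon]
      simp only [eval_smul, eval_sub, leg_endpoint _ _ hm, smul_eq_mul, Nat.add_sub_cancel]
      split_ifs with h
      · subst h
        have e : ((-1:ℝ)^i)^2 = 1 := by rw [← pow_mul, mul_comm, pow_mul]; simp
        have : (√(4 * ((i + 1 : ℕ):ℝ) + 2))⁻¹ * ((-1) ^ (i + 1) - (-1) ^ i) * (-1) ^ (i + 1) / 2
          = (√(4 * ((i + 1 : ℕ):ℝ) + 2))⁻¹ := by
          rw [pow_succ]; linear_combination (√(4 * ((i + 1 : ℕ):ℝ) + 2))⁻¹ * e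
        rw [this, ← smul_sub]; congr 1; ring
      · simp [pow_succ]
    rw [key, derivative_smul, derivative_sub, leg_deriv, smul_smul, ← sqrt_aux]
    congr 2
    push_cast; ring

lemma recon_sum (p : ℕ) {ι : Type*} (s : Finset ι) (c : ι → ℝ) (f : ι → ℝ[X]) :
    recon p (∑ i ∈ s, c i • f i) = ∑ i ∈ s, c i • recon p (f i) := by
  simp only [recon, eval_finsetSum, eval_smul, smul_eq_mul, Finset.sum_mul, Finset.sum_div]
  rw [Finset.sum_smul, ← Finset.sum_sub_distrib]
  refine Finset.sum_congr rfl fun i _ => ?_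
  rw [smul_sub (c i), smul_smul (c i)]
  congr 2; ring

lemma recon_norm (p : ℕ) (hp : 2 ≤ p) (c : Fin (p+1) → ℝ) :
    ∫ s in (-1 : ℝ)..1,
      ((derivative (recon p (∑ j : Fin (p + 1), c j • psi p (j : ℕ)))).eval s) ^ 2 = ∑ j, c j ^ 2 := by
  rw [recon_sum, derivative_sum]
  simp only [derivative_smul, recon_deriv p _ hp, smul_smul]
  rw [leg_sum _ (fun j : Fin (p+1) => (j:ℕ)) (fun a _ b _ h => Fin.ext h)]
  refine Finset.sum_congr rfl fun j _ => ?_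
  rw [mul_pow, div_pow, Real.sq_sqrt (by positivity)]
  field_simp
  ring

lemma piece_bound (p q : ℕ) (c : Fin (p+1) → ℝ) (s : Finset (Fin (p+1)))
    (m : Fin (p+1) → ℕ) (hm : Set.InjOn m s) (hs : ∀ j ∈ s, q < (j:ℕ)) (hml : ∀ j ∈ s, (j:ℕ) ≤ m j + 1) :
    ∫ x in (-1:ℝ)..1, ((∑ j ∈ s, (c j * (Real.sqrt (4 * ((j:ℕ) : ℝ) + 2))⁻¹) • legendre (m j)).eval x) ^ 2
      ≤ (∑ j, c j ^ 2) / ((q:ℝ) + 1) ^ 2 := by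
  rw [leg_sum s m hm, Finset.sum_div]
  refine (Finset.sum_le_sum (g := fun j => c j ^ 2 / ((q:ℝ) + 1) ^ 2) fun j hj => ?_).trans
    (Finset.sum_le_sum_of_subset_of_nonneg (Finset.subset_univ s) fun _ _ _ => by positivity)
  rw [mul_pow, inv_pow, Real.sq_sqrt (by positivity), mul_assoc, div_eq_mul_inv (c j ^ 2)]
  refine mul_le_mul_of_nonneg_left ?_ (sq_nonneg _)
  have h1 : (q:ℝ) + 1 ≤ (j:ℕ) := by exact_mod_cast hs j hj
  have h2 : ((j:ℕ):ℝ) ≤ m j + 1 := by exact_mod_cast hml j hj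
  have hq : (0:ℝ) ≤ q := by positivity
  rw [mul_comm, ← div_eq_mul_inv, div_div, inv_eq_one_div, div_le_div_iff₀ (by positivity) (by positivity)]
  have h3 : (0:ℝ) ≤ m j := by positivity
  have h4 : ((q:ℝ) + 1) * (2 * (q + 1)) ≤ (2 * (m j : ℝ) + 1) * (4 * ((j:ℕ):ℝ) + 2) :=
    mul_le_mul (by linarith) (by linarith) (by positivity) (by positivity)
  linarith

lemma three_bound (f g h : ℝ[X]) (B : ℝ)
    (hf : ∫ x in (-1:ℝ)..1, (f.eval x) ^ 2 ≤ B) (hg : ∫ x in (-1:ℝ)..1, (g.eval x) ^ 2 ≤ B)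
    (hh : ∫ x in (-1:ℝ)..1, (h.eval x) ^ 2 ≤ B) :
    ∫ x in (-1:ℝ)..1, ((f + g - h).eval x) ^ 2 ≤ 9 * B := by
  have hi (r : ℝ[X]) : IntervalIntegrable (fun x => (r.eval x)^2) MeasureTheory.volume (-1) 1 :=
    (r.continuous.pow 2).intervalIntegrable _ _
  have := integral_mono_on (a := -1) (b := 1) (by norm_num) (hi (f + g - h))
    ((((hi f).add (hi g)).add (hi h)).const_mul 3) (fun x _ => by
      simp only [eval_add, eval_sub]
      nlinarith [sq_nonneg (f.eval x - g.eval x), sq_nonneg (f.eval x + h.eval x),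
        sq_nonneg (g.eval x + h.eval x)])
  rw [integral_const_mul, integral_add ((hi f).add (hi g)) (hi h), integral_add (hi f) (hi g)] at this
  linarith

/-- **A priori estimate for the projector `π_q`.** There is a constant `C > 0`, independent
of `p` and `q`, such that for every `p ≥ 2`, every `0 ≤ q ≤ p−1` and every `u ∈ P_p` written
as `u = Σ_{j=0}^p c_j ψ_j`, the projector `π_q u := Σ_{j=0}^q c_j ψ_j` satisfies
`‖u − π_q u‖_{L²(−1,1)} ≤ C (q+1)⁻¹ ‖(I u)'‖_{L²(−1,1)}`. -/
theorem projector_estimate :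
    ∃ C : ℝ, 0 < C ∧ ∀ p : ℕ, 2 ≤ p → ∀ q : ℕ, q ≤ p - 1 → ∀ c : Fin (p + 1) → ℝ,
      Real.sqrt (∫ s in (-1 : ℝ)..1,
          (((∑ j : Fin (p + 1), c j • psi p (j : ℕ)) -
              ∑ j ∈ Finset.univ.filter (fun j : Fin (p + 1) => (j : ℕ) ≤ q),
                c j • psi p (j : ℕ)).eval s) ^ 2)
        ≤ C / ((q : ℝ) + 1) *
          Real.sqrt (∫ s in (-1 : ℝ)..1,
            ((Polynomial.derivative (recon p (∑ j : Fin (p + 1), c j • psi p (j : ℕ)))).eval s) ^ 2) := by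
  refine ⟨3, by norm_num, fun p hp q hq c => ?_⟩
  rw [recon_norm p hp c]
  set S := Finset.univ.filter (fun j : Fin (p + 1) => ¬ (j : ℕ) ≤ q) with hS
  have hmem : ∀ j ∈ S, q < (j:ℕ) := fun j hj => by simpa [hS] using hj
  have hsplit : ((∑ j : Fin (p + 1), c j • psi p (j : ℕ)) -
              ∑ j ∈ Finset.univ.filter (fun j : Fin (p + 1) => (j : ℕ) ≤ q),
                c j • psi p (j : ℕ)) =
      (∑ j ∈ S.filter (fun j : Fin (p + 1) => (j:ℕ) = p),
        (c j * (Real.sqrt (4 * ((j:ℕ) : ℝ) + 2))⁻¹) • legendre (j:ℕ)) +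
      (∑ j ∈ S.filter (fun j : Fin (p + 1) => ¬ (j:ℕ) = p),
        (c j * (Real.sqrt (4 * ((j:ℕ) : ℝ) + 2))⁻¹) • legendre ((j:ℕ) + 1)) -
      ∑ j ∈ S, (c j * (Real.sqrt (4 * ((j:ℕ) : ℝ) + 2))⁻¹) • legendre ((j:ℕ) - 1) := by
    rw [← Finset.sum_filter_add_sum_filter_not Finset.univ (fun j : Fin (p + 1) => (j : ℕ) ≤ q),
      add_sub_cancel_left, ← hS, Finset.sum_filter (s := S), Finset.sum_filter (s := S), ← Finset.sum_add_distrib,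
      ← Finset.sum_sub_distrib]
    refine Finset.sum_congr rfl fun j hj => ?_
    rw [psi_pos _ _ (by have := hmem j hj; omega), smul_smul, smul_sub]
    congr 1
    by_cases h : (j:ℕ) = p <;> simp [h]
  have hB := three_bound _ _ _ _
    (piece_bound p q c (S.filter (fun j : Fin (p + 1) => (j:ℕ) = p)) (fun j => (j:ℕ))
      (fun a _ b _ h => Fin.ext h) (fun j hj => hmem j (Finset.mem_filter.1 hj).1) (fun j _ => by omega))
    (piece_bound p q c (S.filter (fun j : Fin (p + 1) => ¬ (j:ℕ) = p)) (fun j => (j:ℕ) + 1)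
      (fun a _ b _ h => Fin.ext (by simpa using h)) (fun j hj => hmem j (Finset.mem_filter.1 hj).1)
      (fun j _ => by omega))
    (piece_bound p q c S (fun j => (j:ℕ) - 1)
      (fun a ha b hb h => Fin.ext (by
        have := hmem a ha; have := hmem b hb; simp only at h; omega)) hmem (fun j _ => by omega))
  rw [hsplit]
  refine (Real.sqrt_le_sqrt hB).trans (le_of_eq ?_)
  rw [show 9 * ((∑ j, c j ^ 2) / ((q:ℝ) + 1) ^ 2) = (3 / ((q:ℝ)+1)) ^ 2 * ∑ j, c j ^ 2 by
    rw [div_pow]; ring, Real.sqrt_mul (by positivity), Real.sqrt_sq (by positivity)]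
end

section
/- Let p ≥ 2 and let ψ_0 := (L_1 + L_0)/√2, ψ_k := (L_{k+1} − L_{k−1})/√(4k+2) for 1 ≤ k ≤ p−1, ψ_p := (L_p − L_{p−1})/√(4p+2). Then: (i) ∫_{−1}^{1} ψ_k ψ_j ds = 0 whenever |k − j| > 2; and (ii) there exists a constant C > 0, independent of p and k, such that ∫_{−1}^{1} ψ_k² ds ≤ C (k+1)^{−2} for all k = 0, …, p. -/
open Polynomial

open intervalIntegral in
/-- integration over `[-1,1]` as a linear functional on polynomials -/
noncomputable def intJ : Polynomial ℝ →ₗ[ℝ] ℝ where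
  toFun q := ∫ s in (-1 : ℝ)..1, q.eval s
  map_add' q r := by
    simp only [eval_add]
    exact integral_add (q.continuous.intervalIntegrable _ _) (r.continuous.intervalIntegrable _ _)
  map_smul' c q := by
    simp only [eval_smul, smul_eq_mul, RingHom.id_apply]
    exact integral_const_mul c _

theorem intJ_derivative (q : Polynomial ℝ) : intJ (derivative q) = q.eval 1 - q.eval (-1) := by
  change ∫ s in (-1 : ℝ)..1, (derivative q).eval s = _
  exact intervalIntegral.integral_eq_sub_of_hasDerivAt (fun x _ => q.hasDerivAt x)
    ((derivative q).continuous.intervalIntegrable _ _)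

/-- the iterated derivatives of `(X^2-1)^n` -/
noncomputable def wD (n m : ℕ) : Polynomial ℝ :=
  (fun q => Polynomial.derivative q)^[m] ((Polynomial.X ^ 2 - 1) ^ n)

theorem wD_zero (n : ℕ) : wD n 0 = (X ^ 2 - 1) ^ n := rfl

theorem wD_succ (n m : ℕ) : wD n (m + 1) = derivative (wD n m) := by
  unfold wD
  rw [Function.iterate_succ_apply']

theorem wD_eval (a : ℝ) (ha : a ^ 2 = 1) (n m : ℕ) (h : m < n) : (wD n m).eval a = 0 := by
  have h1 : (X - C a) ^ n ∣ (X ^ 2 - 1 : Polynomial ℝ) ^ n := by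
    apply pow_dvd_pow_of_dvd
    rw [dvd_iff_isRoot]
    simp [ha]
  have h2 := pow_sub_dvd_iterate_derivative_of_pow_dvd m h1
  have h3 : (X - C a) ∣ wD n m := (dvd_pow_self _ (by omega)).trans h2
  rwa [dvd_iff_isRoot] at h3

theorem intJ_parts (n m : ℕ) (h : m ≤ n) (q : Polynomial ℝ) :
    intJ (wD n m * q) = (-1) ^ m * intJ ((X ^ 2 - 1) ^ n * derivative^[m] q) := by
  induction m generalizing q with
  | zero => simp [wD_zero]
  | succ m ih =>
    have h1 := intJ_derivative (wD n m * q)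
    rw [derivative_mul, ← wD_succ, map_add, eval_mul, eval_mul,
      wD_eval 1 (by norm_num) n m (by omega), wD_eval (-1) (by norm_num) n m (by omega),
      ih (by omega)] at h1
    rw [Function.iterate_succ_apply, pow_succ]
    linarith

theorem w_monic : (X ^ 2 - 1 : Polynomial ℝ).Monic := by
  simpa using monic_X_pow_sub_C (1 : ℝ) (n := 2) (by norm_num)

theorem w_natDegree (n : ℕ) : ((X ^ 2 - 1 : Polynomial ℝ) ^ n).natDegree = 2 * n := by
  have : (X ^ 2 - 1 : Polynomial ℝ).natDegree = 2 := by
    simpa using natDegree_X_pow_sub_C (n := 2) (r := (1 : ℝ))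
  rw [w_monic.natDegree_pow, this, mul_comm]

theorem wD_natDegree (n : ℕ) : (wD n n).natDegree ≤ n := by
  have := natDegree_iterate_derivative ((X ^ 2 - 1 : Polynomial ℝ) ^ n) n
  rw [w_natDegree] at this
  exact this.trans (by omega)

theorem intJ_orth_lt (n m : ℕ) (h : m < n) : intJ (wD n n * wD m m) = 0 := by
  rw [intJ_parts n n le_rfl, iterate_derivative_eq_zero ((wD_natDegree m).trans_lt h)]
  simp

theorem wD_top (n : ℕ) : derivative^[n] (wD n n) = C ((2 * n).factorial : ℝ) := by
  have : derivative^[n] (wD n n) = derivative^[2 * n] ((X ^ 2 - 1 : Polynomial ℝ) ^ n) := by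
    rw [two_mul, Function.iterate_add_apply]
    rfl
  rw [this]
  ext i
  rw [coeff_iterate_derivative, coeff_C]
  split_ifs with hi
  · subst hi
    have hc : ((X ^ 2 - 1 : Polynomial ℝ) ^ n).coeff (2 * n) = 1 := by
      have := (w_monic.pow n).coeff_natDegree
      rwa [w_natDegree] at this
    simp [hc, Nat.descFactorial_self]
  · rw [coeff_eq_zero_of_natDegree_lt (by rw [w_natDegree]; omega), smul_zero]

theorem intJ_one : intJ 1 = 2 := by
  have := intJ_derivative X
  rw [derivative_X] at this
  rw [this]; norm_num

theorem intJ_w_rec (n : ℕ) :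
    (2 * (n : ℝ) + 3) * intJ ((X ^ 2 - 1) ^ (n + 1)) = - (2 * (n + 1)) * intJ ((X ^ 2 - 1) ^ n) := by
  have h1 := intJ_derivative (X * (X ^ 2 - 1) ^ (n + 1))
  have h2 : derivative (X * (X ^ 2 - 1) ^ (n + 1) : Polynomial ℝ)
      = (2 * (n : ℝ) + 3) • (X ^ 2 - 1) ^ (n + 1) + (2 * ((n : ℝ) + 1)) • (X ^ 2 - 1) ^ n := by
    rw [derivative_mul, derivative_X, derivative_pow]
    simp only [smul_eq_C_mul, derivative_sub, derivative_X_pow, derivative_one, map_add, map_mul,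
      C_eq_natCast, map_ofNat, map_one, map_natCast, Nat.add_sub_cancel]
    push_cast
    ring
  rw [h2, map_add, map_smul, map_smul] at h1
  simp at h1
  linarith

theorem intJ_w (n : ℕ) : (-1) ^ n * ((2 * n).factorial : ℝ) * intJ ((X ^ 2 - 1) ^ n)
    = (2 ^ n * (n.factorial : ℝ)) ^ 2 * (2 / (2 * n + 1)) := by
  induction n with
  | zero => simp [intJ_one]
  | succ n ih =>
    have hr := intJ_w_rec n
    have h3 : (2 * (n : ℝ) + 3) ≠ 0 := by positivity
    have h1 : (2 * (n : ℝ) + 1) ≠ 0 := by positivity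
    have hI : intJ ((X ^ 2 - 1) ^ (n + 1))
        = - (2 * (n + 1)) * intJ ((X ^ 2 - 1) ^ n) / (2 * (n : ℝ) + 3) := by
      field_simp; linarith
    have hf : (((2 * (n + 1)).factorial : ℕ) : ℝ)
        = (2 * n + 2) * (2 * n + 1) * ((2 * n).factorial : ℝ) := by
      rw [show 2 * (n + 1) = (2 * n + 1) + 1 by ring, Nat.factorial_succ, Nat.factorial_succ]
      push_cast; ring
    rw [hI, hf, Nat.factorial_succ]
    push_cast
    have e : (-1 : ℝ) ^ (n + 1) * ((2 * n + 2) * (2 * n + 1) * ((2 * n).factorial : ℝ)) *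
        (- (2 * (n + 1)) * intJ ((X ^ 2 - 1) ^ n) / (2 * (n : ℝ) + 3))
        = ((-1) ^ n * ((2 * n).factorial : ℝ) * intJ ((X ^ 2 - 1) ^ n)) *
          ((2 * n + 2) * (2 * n + 1) * (2 * (n + 1)) / (2 * (n : ℝ) + 3)) := by
      rw [pow_succ]; ring
    rw [e, ih, show 2 * ((n : ℝ) + 1) + 1 = 2 * n + 3 by ring]
    field_simp
    ring

theorem legendre_eq (k : ℕ) :
    legendre k = ((2 ^ k * (Nat.factorial k) : ℝ))⁻¹ • wD k k := rfl

theorem legendre_orth (n m : ℕ) (h : n ≠ m) : intJ (legendre n * legendre m) = 0 := by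
  rw [legendre_eq, legendre_eq, smul_mul_smul_comm, map_smul]
  rcases lt_or_gt_of_ne h with h | h
  · rw [mul_comm (wD n n), intJ_orth_lt m n h, smul_zero]
  · rw [intJ_orth_lt n m h, smul_zero]

theorem legendre_norm (n : ℕ) : intJ (legendre n * legendre n) = 2 / (2 * n + 1) := by
  have hp : (2 ^ n * (n.factorial : ℝ)) ≠ 0 := by positivity
  have h1 : intJ (wD n n * wD n n) = (2 ^ n * (n.factorial : ℝ)) ^ 2 * (2 / (2 * n + 1)) := by
    rw [← intJ_w, intJ_parts n n le_rfl, wD_top, mul_comm _ (C _), ← smul_eq_C_mul, map_smul,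
      smul_eq_mul, mul_assoc]
  rw [legendre_eq, smul_mul_smul_comm, map_smul, h1, smul_eq_mul]
  field_simp

theorem psi_form (p k : ℕ) (hp : 2 ≤ p) (hk : k ≤ p) : ∃ (c e : ℝ) (a b : ℕ),
    psi p k = c • (legendre a + e • legendre b) ∧ a ≠ b ∧ e ^ 2 = 1 ∧
    c ^ 2 ≤ 1 / (2 * k + 1) ∧ a ≤ k + 1 ∧ a ≤ p ∧ k ≤ a + 1 ∧ b ≤ k + 1 ∧ b ≤ p ∧ k ≤ b + 1
      ∧ (k = p → k ≤ a + 1 ∧ a ≤ k) := by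
  have hs : ∀ x : ℝ, 0 ≤ x → (Real.sqrt (4 * x + 2))⁻¹ ^ 2 ≤ 1 / (2 * x + 1) := by
    intro x hx
    rw [inv_pow, Real.sq_sqrt (by positivity), one_div]
    apply inv_anti₀ (by positivity)
    linarith
  unfold psi
  split_ifs with h0 h1
  · subst h0
    refine ⟨(Real.sqrt 2)⁻¹, 1, 1, 0, by rw [one_smul], by simp, by simp, ?_, by omega⟩
    have := hs 0 le_rfl
    simpa using this
  · subst h1
    exact ⟨_, -1, k, k - 1, by rw [neg_one_smul, sub_eq_add_neg], by omega, by simp,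
      hs k k.cast_nonneg, by omega⟩
  · exact ⟨_, -1, k + 1, k - 1, by rw [neg_one_smul, sub_eq_add_neg], by omega, by simp,
      hs k k.cast_nonneg, by omega⟩

theorem psi_orth_lt (p k j : ℕ) (hp : 2 ≤ p) (hk : k ≤ p) (h : j + 2 < k) :
    intJ (psi p k * psi p j) = 0 := by
  obtain ⟨c, e, a, b, h1, hab, -, -, h2⟩ := psi_form p k hp hk
  obtain ⟨c', e', a', b', h1', hab', -, -, h2'⟩ := psi_form p j hp (by omega)
  rw [h1, h1', smul_mul_smul_comm, map_smul, add_mul, mul_add, mul_add]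
  simp only [smul_mul_assoc, mul_smul_comm, map_add, map_smul]
  rw [legendre_orth a a' (by omega), legendre_orth a b' (by omega),
    legendre_orth b a' (by omega), legendre_orth b b' (by omega)]
  simp

theorem legendre_norm_le (k a : ℕ) (h : k ≤ a + 1) :
    intJ (legendre a * legendre a) ≤ 6 / (k + 1) := by
  rw [legendre_norm, div_le_div_iff₀ (by positivity) (by positivity)]
  have : (k : ℝ) ≤ a + 1 := by exact_mod_cast h
  have : (0 : ℝ) ≤ a := a.cast_nonneg
  linarith

theorem psi_norm_le (p k : ℕ) (hp : 2 ≤ p) (hk : k ≤ p) :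
    intJ (psi p k * psi p k) ≤ 12 / ((k : ℝ) + 1) ^ 2 := by
  obtain ⟨c, e, a, b, h1, hab, he, hc, h2⟩ := psi_form p k hp hk
  have ha := legendre_norm_le k a (by omega)
  have hb := legendre_norm_le k b (by omega)
  have key : intJ (psi p k * psi p k)
      = c ^ 2 * (intJ (legendre a * legendre a) + intJ (legendre b * legendre b)) := by
    rw [h1, smul_mul_smul_comm, map_smul, add_mul, mul_add, mul_add]
    simp only [smul_mul_assoc, mul_smul_comm, map_add, map_smul]
    rw [legendre_orth a b hab, legendre_orth b a hab.symm]
    simp only [smul_eq_mul]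
    linear_combination c ^ 2 * intJ (legendre b * legendre b) * he
  have hk0 : (0 : ℝ) ≤ k := k.cast_nonneg
  have hc' : c ^ 2 ≤ 1 / ((k : ℝ) + 1) := by
    refine hc.trans ?_
    gcongr
    linarith
  rw [key]
  calc _ ≤ c ^ 2 * (12 / (k + 1)) := by
        gcongr
        have : (12 : ℝ) / (k + 1) = 6 / (k + 1) + 6 / (k + 1) := by ring
        linarith
    _ ≤ 1 / ((k : ℝ) + 1) * (12 / (k + 1)) := by gcongr
    _ = _ := by field_simp

/-- **Properties of the basis `ψ_k`.** (i) For `p ≥ 2` and `k, j ≤ p` with `|k − j| > 2`,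
`∫_{−1}^{1} ψ_k ψ_j ds = 0`; and (ii) there is a constant `C > 0`, independent of `p` and
`k`, such that `∫_{−1}^{1} ψ_k² ds ≤ C (k+1)⁻²` for all `k = 0, …, p`. -/
theorem psi_L2_properties :
    (∀ p : ℕ, 2 ≤ p → ∀ k ≤ p, ∀ j ≤ p, 2 < |(k : ℤ) - (j : ℤ)| →
      (∫ s in (-1 : ℝ)..1, (psi p k).eval s * (psi p j).eval s) = 0) ∧
    ∃ C : ℝ, 0 < C ∧ ∀ p : ℕ, 2 ≤ p → ∀ k ≤ p,
      (∫ s in (-1 : ℝ)..1, ((psi p k).eval s) ^ 2) ≤ C / ((k : ℝ) + 1) ^ 2 := by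
  have conv : ∀ q r : Polynomial ℝ,
      (∫ s in (-1 : ℝ)..1, q.eval s * r.eval s) = intJ (q * r) := by
    intro q r
    simp only [← eval_mul]
    rfl
  refine ⟨?_, 12, by norm_num, ?_⟩
  · intro p hp k hk j hj h
    rw [conv]
    rcases lt_or_ge j k with hjk | hjk
    · exact psi_orth_lt p k j hp hk (by rw [abs_of_pos (by omega)] at h; omega)
    · rw [mul_comm]
      exact psi_orth_lt p j k hp hj (by rw [abs_of_nonpos (by omega)] at h; omega)
  · intro p hp k hk
    simp only [sq (eval _ _)]
    rw [conv]
    exact psi_norm_le p k hp hk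
end
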